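/- There is an absolute constant c > 0 such that the following holds for all sufficiently large integers n. Consider λ > 0 and integers L and R satisfying (log n)/20 < L < L² < R < (n − 5L² − 3L)/9, and let n' = n − 8R − 5L² − 3L and λ' = λ/2^{R−L}. Condition on an outcome of M_{n'} for which there is a subset B ⊆ {1,…,n'} of size n' − R such that M_{n'}[{R+1,…,n'}, B] is λ-heavy. Then with probability at least 1 − (1/8)·n^{−c}, there is a set B' of size n − L with {1,…,n−3L} ⊆ B' ⊆ {1,…,n} such that M_n[{L+1,…,n}, B'] is λ'-heavy. -/

import Mathlib

/-!
The rows and columns `n', …, n - 1` of the symmetric matrix are exposed one at a time. At time `m`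
the object of interest is a set of columns `B ⊆ {0, …, m - 1}` of size `m - s` such that the rows
`s, …, m - 1` and the columns `B` have a heavy permanent; `s` is the deficit. Write `x` for the
random sign vector forming the new row and column, `A` for the current rows, and `P` for the
current permanent.

* Keeping the deficit (`IsStep.card_neutral`). Adding the new row and a missing column `b` gives
  the permanent `x_b P + (a function of x on B)`. Once `x` is fixed on `B`, the signs `x_b` of the
  `s` missing columns are independent, so all these permanents are small with probability at
  most `2^(-s)`.

* Lowering the deficit (`IsStep.card_decrement`). Adding the new row and column together with one
  more row `a` and one more column `b` gives a quadratic form in `x`, which is at least as large as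
  its coefficient of `x_a x_b` with probability at least `1/4`. By symmetry this coefficient is
  `P + Q_b`, where `Q_b` is the permanent on `A ∪ {a} \ {b}` and `B ∪ {b} \ {a}` (or `0` if this
  makes no sense). If `|P + Q_b|` is less than half the bound for two missing columns `b₁`, `b₂`,
  then `Q_{b₁} + Q_{b₂}`, which is close to `-2P`, is large, and it is the coefficient of
  `x_{b₁} x_{b₂}` for the rows `A ∪ {a}` and the columns `B ∪ {b₁, b₂} \ {a}`. Thus the deficit
  drops with probability at least `1/4` while a factor two is lost.

* Three phases. In `8R` steps the deficit is lowered from `R` to `L²`, in `5L²` steps from `L²` to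
  `L` (`phase_deficit`), and in the last `3L` steps the columns below `n - 3L` are filled
  (`phase_fill`). A phase fails if some step is lost, which costs at most `2^(-L²)` per step in
  the first phase and `2^(-L)` per step afterwards, or if there are too few successful steps,
  which is exponentially unlikely. `process_bound` makes this precise by an exponential potential,
  and `failure_bound` adds up the errors.
-/

open Finset

/-- The real number (`1` or `-1`) associated to a Boolean: a Rademacher value. -/
noncomputable def rad (b : Bool) : ℝ := if b then 1 else -1

/-- The permanent of the submatrix of `M` with row set `A` and column set `B`,
defined as a sum over all bijections between `A` and `B` (it equals `0` if
`A.card ≠ B.card`). Since the permanent is invariant under row and column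
permutations, this faithfully represents `per M[A,B]`. -/
noncomputable def permOn {m n : ℕ} (M : Matrix (Fin m) (Fin n) ℝ)
    (A : Finset (Fin m)) (B : Finset (Fin n)) : ℝ :=
  ∑ σ : {x // x ∈ A} ≃ {y // y ∈ B}, ∏ i : {x // x ∈ A}, M i.1 (σ i).1

/-- The random symmetric extension of a fixed `n' × n'` matrix `M` to an `n × n` matrix:
the top-left `n' × n'` block is `M`, and the remaining entries are Rademacher values
determined symmetrically by the Boolean data `ω`. As `ω` ranges uniformly over all Boolean
data, the new entries (on and above the diagonal) are i.i.d. Rademacher random variables. -/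
noncomputable def extSym {n' : ℕ} (n : ℕ) (M : Matrix (Fin n') (Fin n') ℝ)
    (ω : Fin n → Fin n → Bool) : Matrix (Fin n) (Fin n) ℝ :=
  fun i j =>
    if h : (i : ℕ) < n' ∧ (j : ℕ) < n' then M ⟨i, h.1⟩ ⟨j, h.2⟩
    else if i ≤ j then rad (ω i j) else rad (ω j i)

open Classical in
/-- The probability of the event `P` for the random symmetric extension of `M` to size `n`
(i.e. conditionally on the outcome `M` for the top-left block). -/
noncomputable def probExt {n' : ℕ} (n : ℕ) (M : Matrix (Fin n') (Fin n') ℝ)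
    (P : Matrix (Fin n) (Fin n) ℝ → Prop) : ℝ :=
  ((univ.filter fun ω : Fin n → Fin n → Bool => P (extSym n M ω)).card : ℝ) / 2 ^ (n * n)

/-! ### Permanents of submatrices: transport and Laplace expansion -/

theorem permOn_transpose {m n : ℕ} (M : Matrix (Fin m) (Fin n) ℝ)
    (A : Finset (Fin m)) (B : Finset (Fin n)) :
    permOn M A B = permOn M.transpose B A := by
  unfold permOn
  refine Fintype.sum_equiv ⟨Equiv.symm, Equiv.symm, fun _ => rfl, fun _ => rfl⟩ _ _ ?_
  intro σ
  refine Fintype.prod_equiv σ _ _ ?_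
  intro i
  simp

theorem permOn_congr {m n : ℕ} {M M' : Matrix (Fin m) (Fin n) ℝ}
    {A : Finset (Fin m)} {B : Finset (Fin n)}
    (h : ∀ i ∈ A, ∀ j ∈ B, M i j = M' i j) : permOn M A B = permOn M' A B := by
  unfold permOn
  refine Finset.sum_congr rfl fun σ _ => Finset.prod_congr rfl fun i _ => ?_
  exact h _ i.2 _ (σ i).2

/-- The sum over bijections may be transported along bijections of the row and column
index sets. -/
theorem permOn_transport {m n m' n' : ℕ} (M : Matrix (Fin m) (Fin n) ℝ)
    (M' : Matrix (Fin m') (Fin n') ℝ)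
    {A : Finset (Fin m)} {B : Finset (Fin n)} {A' : Finset (Fin m')} {B' : Finset (Fin n')}
    (e : A ≃ A') (f : B ≃ B')
    (h : ∀ i j, M i.1 j.1 = M' (e i).1 (f j).1) : permOn M A B = permOn M' A' B' := by
  unfold permOn
  refine Fintype.sum_equiv (Equiv.equivCongr e f) _ _ ?_
  intro σ
  refine Fintype.prod_equiv e _ _ ?_
  intro i
  rw [h]
  simp [Equiv.equivCongr]

/-- Laplace expansion of the permanent along a row. -/
theorem permOn_row {m n : ℕ} (M : Matrix (Fin m) (Fin n) ℝ)
    {A : Finset (Fin m)} {B : Finset (Fin n)} {r : Fin m} (hr : r ∉ A) :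
    permOn M (insert r A) B = ∑ j ∈ B, M r j * permOn M A (B.erase j) := by
  classical
  -- Split the bijections according to the image of the row `r`.
  have key : permOn M (insert r A) B = ∑ j : {y // y ∈ B},
      ∑ σ : {x // x ∈ A} ≃ {y : {y // y ∈ B} // y ≠ j},
        M r j.1 * ∏ i : {x // x ∈ A}, M i.1 (σ i).1.1 := by
    unfold permOn
    rw [← Fintype.sum_sigma']
    symm
    let e0 : Option {x // x ∈ A} ≃ {x // x ∈ insert r A} :=
      (Finset.subtypeInsertEquivOption hr).symm
    have e0s : ∀ i, (e0 (some i)).1 = i.1 := fun i => rfl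
    let E : (Σ j : {y // y ∈ B}, ({x // x ∈ A} ≃ {y : {y // y ∈ B} // y ≠ j})) ≃
        ({x // x ∈ insert r A} ≃ {y // y ∈ B}) :=
      (Equiv.sigmaCongrRight fun j => (Equiv.optionSubtype j).symm).trans
        ((Equiv.sigmaFiberEquiv fun e : Option {x // x ∈ A} ≃ {y // y ∈ B} => e none).trans
          (Equiv.equivCongr e0 (Equiv.refl _)))
    refine Fintype.sum_equiv E _ _ ?_
    rintro ⟨j, σ⟩
    have hE : ∀ o, (E ⟨j, σ⟩) (e0 o) = ((Equiv.optionSubtype j).symm σ).1 o := by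
      intro o
      simp [E, Equiv.equivCongr, Equiv.sigmaFiberEquiv]
    rw [← Equiv.prod_comp e0, Fintype.prod_option, hE]
    congr 1
    refine Finset.prod_congr rfl fun i _ => ?_
    rw [hE, e0s]
    simp [Equiv.optionSubtype]
  rw [key, ← Finset.sum_coe_sort B]
  refine Finset.sum_congr rfl fun j _ => ?_
  rw [← Finset.mul_sum]
  congr 1
  unfold permOn
  let f : {y : {y // y ∈ B} // y ≠ j} ≃ {y // y ∈ B.erase j.1} :=
    { toFun := fun y => ⟨y.1.1, Finset.mem_erase.2 ⟨fun h => y.2 (Subtype.ext h), y.1.2⟩⟩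
      invFun := fun y => ⟨⟨y.1, (Finset.mem_erase.1 y.2).2⟩,
        fun h => (Finset.mem_erase.1 y.2).1 (congrArg Subtype.val h)⟩
      left_inv := fun y => rfl
      right_inv := fun y => rfl }
  refine Fintype.sum_equiv (Equiv.equivCongr (Equiv.refl _) f) _ _ ?_
  intro σ
  rfl

theorem permOn_col {m n : ℕ} (M : Matrix (Fin m) (Fin n) ℝ)
    {A : Finset (Fin m)} {B : Finset (Fin n)} {r : Fin n} (hr : r ∉ B) :
    permOn M A (insert r B) = ∑ i ∈ A, M i r * permOn M (A.erase i) B := by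
  rw [permOn_transpose, permOn_row _ hr]
  refine Finset.sum_congr rfl fun i _ => ?_
  rw [permOn_transpose M]
  rfl

/-! ### Exposing one new row and column -/

/-- `IsStep K N m` says that the matrices `N x`, for `x` a Boolean vector, all agree with `K` on
the indices below `m`, while row `m` and column `m` of `N x` are given (up to index `m`) by the
signs encoded in `x`. This is the exposure of one new row and column of a random symmetric
matrix. -/
structure IsStep {n : ℕ} (K : Matrix (Fin n) (Fin n) ℝ)
    (N : (Fin n → Bool) → Matrix (Fin n) (Fin n) ℝ) (m : Fin n) : Prop where
  old : ∀ x i j, i < m → j < m → N x i j = K i j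
  row : ∀ x j, j ≤ m → N x m j = rad (x j)
  col : ∀ x i, i ≤ m → N x i m = rad (x i)

theorem rad_ne {b c : Bool} (h : b ≠ c) : rad b = - rad c := by
  cases b <;> cases c <;> simp_all [rad]

theorem rad_not (b : Bool) : rad (!b) = - rad b := by
  cases b <;> simp [rad]

theorem abs_rad (b : Bool) : |rad b| = 1 := by
  cases b <;> simp [rad]

section step

variable {n : ℕ} {K : Matrix (Fin n) (Fin n) ℝ}
  {N : (Fin n → Bool) → Matrix (Fin n) (Fin n) ℝ} {m : Fin n}

theorem IsStep.permOn_old (h : IsStep K N m) (x : Fin n → Bool) {A B : Finset (Fin n)}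
    (hA : ∀ i ∈ A, i < m) (hB : ∀ j ∈ B, j < m) : permOn (N x) A B = permOn K A B :=
  permOn_congr fun i hi j hj => h.old x i j (hA i hi) (hB j hj)

theorem IsStep.permOn_linear (h : IsStep K N m) (x : Fin n → Bool) {A B : Finset (Fin n)}
    (hA : ∀ i ∈ A, i < m) (hB : ∀ j ∈ B, j < m) :
    permOn (N x) (insert m A) B = ∑ j ∈ B, rad (x j) * permOn K A (B.erase j) := by
  rw [permOn_row _ fun hm => lt_irrefl _ (hA m hm)]
  refine Finset.sum_congr rfl fun j hj => ?_
  rw [h.row x j (hB j hj).le, h.permOn_old x hA fun i hi => hB i (Finset.mem_of_mem_erase hi)]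

theorem IsStep.permOn_quadratic (h : IsStep K N m) (x : Fin n → Bool) {A B : Finset (Fin n)}
    (hA : ∀ i ∈ A, i < m) (hB : ∀ j ∈ B, j < m) :
    permOn (N x) (insert m A) (insert m B) = rad (x m) * permOn K A B +
      ∑ j ∈ B, ∑ i ∈ A, rad (x j) * rad (x i) * permOn K (A.erase i) (B.erase j) := by
  have hmB : m ∉ B := fun hm => lt_irrefl _ (hB m hm)
  rw [permOn_row _ fun hm => lt_irrefl _ (hA m hm), Finset.sum_insert hmB,
    Finset.erase_insert hmB, h.row x m le_rfl, h.permOn_old x hA hB]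
  congr 1
  refine Finset.sum_congr rfl fun j hj => ?_
  have hj' : j ≠ m := (hB j hj).ne
  rw [Finset.erase_insert_of_ne hj'.symm, permOn_col _ fun hm => hmB (Finset.mem_of_mem_erase hm),
    h.row x j (hB j hj).le, Finset.mul_sum]
  refine Finset.sum_congr rfl fun i hi => ?_
  rw [h.col x i (hA i hi).le, h.permOn_old x (fun i hi => hA i (Finset.mem_of_mem_erase hi))
    (fun i hi => hB i (Finset.mem_of_mem_erase hi)), mul_assoc]

/-- Adding the new row and one of the columns `b ∈ T` keeps the permanent heavy for some `b`,
except with probability at most `2 ^ (-|T|)`: once the signs outside `T` are fixed, at most one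
choice of the signs in `T` makes all of these permanents small. -/
theorem IsStep.card_neutral (h : IsStep K N m) {A B T : Finset (Fin n)} {μ : ℝ}
    (hA : ∀ i ∈ A, i < m) (hB : ∀ j ∈ B, j < m) (hT : ∀ j ∈ T, j < m) (hTB : ∀ j ∈ T, j ∉ B)
    (hμ : μ ≤ |permOn K A B|) :
    #{x : Fin n → Bool | ¬ ∃ b ∈ T, μ ≤ |permOn (N x) (insert m A) (insert b B)|} * 2 ^ #T
      ≤ 2 ^ n := by
  classical
  have hle : #{x : Fin n → Bool | ¬ ∃ b ∈ T, μ ≤ |permOn (N x) (insert m A) (insert b B)|}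
      ≤ Fintype.card ({i // i ∉ T} → Bool) := by
    rw [← Finset.card_univ]
    refine Finset.card_le_card_of_injOn (fun x i => x i.1) (fun _ _ => Finset.mem_coe.2
      (Finset.mem_univ _)) ?_
    intro x hx y hy hxy
    simp only [Finset.coe_filter, Finset.mem_univ, true_and, Set.mem_ofPred_eq, not_exists,
      not_and, not_le] at hx hy
    have hout : ∀ i, i ∉ T → x i = y i := fun i hi => congrFun hxy ⟨i, hi⟩
    funext b
    by_cases hb : b ∈ T
    · by_contra hne
      have hbB := hTB b hb
      have hins : ∀ j ∈ insert b B, j < m := by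
        intro j hj
        rcases Finset.mem_insert.1 hj with rfl | hj
        · exact hT _ hb
        · exact hB j hj
      have h1 := hx b hb
      have h2 := hy b hb
      rw [h.permOn_linear x hA hins, Finset.sum_insert hbB, Finset.erase_insert hbB] at h1
      rw [h.permOn_linear y hA hins, Finset.sum_insert hbB, Finset.erase_insert hbB] at h2
      have hs : ∑ j ∈ B, rad (x j) * permOn K A ((insert b B).erase j) =
          ∑ j ∈ B, rad (y j) * permOn K A ((insert b B).erase j) := by
        refine Finset.sum_congr rfl fun j hj => ?_
        rw [hout j fun hjT => hTB j hjT hj]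
      rw [hs, rad_ne hne] at h1
      have h3 : |rad (y b) * permOn K A B| = |permOn K A B| := by
        rw [abs_mul, abs_rad, one_mul]
      rw [← h3] at hμ
      rw [abs_lt] at h1 h2
      have : |rad (y b) * permOn K A B| < μ := by
        rw [abs_lt]
        constructor <;> linarith
      linarith
    · exact hout b hb
  have hcard : Fintype.card ({i // i ∉ T} → Bool) * 2 ^ #T = 2 ^ n := by
    have hc : Fintype.card {i // i ∉ T} + #T = n := by
      rw [Fintype.card_subtype_compl, Fintype.card_coe, Fintype.card_fin]
      have := Finset.card_le_univ T
      rw [Fintype.card_fin] at this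
      omega
    rw [Fintype.card_fun, Fintype.card_bool, ← pow_add, hc]
  calc _ ≤ Fintype.card ({i // i ∉ T} → Bool) * 2 ^ #T := Nat.mul_le_mul_right _ hle
    _ = 2 ^ n := hcard

theorem card_flip (S : (Fin n → Bool) → Prop) [DecidablePred S] (p : Fin n → Bool) :
    #{x : Fin n → Bool | S (fun i => xor (x i) (p i))} = #{x : Fin n → Bool | S x} := by
  refine Finset.card_bij' (fun x _ => fun i => xor (x i) (p i))
    (fun x _ => fun i => xor (x i) (p i)) ?_ ?_ ?_ ?_ <;> simp

/-- The coefficient of `x_p x_q` in the permanent with the new row and column adjoined to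
`(A, B)`. -/
noncomputable def mixedCoeff (K : Matrix (Fin n) (Fin n) ℝ) (A B : Finset (Fin n))
    (p q : Fin n) : ℝ :=
  (if q ∈ B ∧ p ∈ A then permOn K (A.erase p) (B.erase q) else 0) +
    (if p ∈ B ∧ q ∈ A then permOn K (A.erase q) (B.erase p) else 0)

/-- The second-order difference in the two signs `x_p`, `x_q` isolates the coefficient of
`x_p x_q`. -/
theorem IsStep.mixed_difference (h : IsStep K N m) {A B : Finset (Fin n)} {p q : Fin n}
    (hA : ∀ i ∈ A, i < m) (hB : ∀ j ∈ B, j < m) (hp : p < m) (hq : q < m) (hpq : p ≠ q)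
    (x xp xq xpq : Fin n → Bool)
    (hxp : ∀ i, xp i = xor (x i) (decide (i = p)))
    (hxq : ∀ i, xq i = xor (x i) (decide (i = q)))
    (hxpq : ∀ i, xpq i = xor (x i) (decide (i = p ∨ i = q))) :
    permOn (N x) (insert m A) (insert m B) - permOn (N xp) (insert m A) (insert m B)
      - permOn (N xq) (insert m A) (insert m B) + permOn (N xpq) (insert m A) (insert m B)
      = 4 * (rad (x p) * rad (x q)) * mixedCoeff K A B p q := by
  classical
  have key : ∀ i j, rad (x j) * rad (x i) - rad (xp j) * rad (xp i) - rad (xq j) * rad (xq i)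
      + rad (xpq j) * rad (xpq i) = 4 * (rad (x p) * rad (x q)) *
        ((if j = q then (if i = p then 1 else 0) else 0) +
          (if j = p then (if i = q then 1 else 0) else 0)) := by
    intro i j
    simp only [hxp, hxq, hxpq]
    by_cases h1 : j = p <;> by_cases h2 : j = q <;> by_cases h3 : i = p <;>
      by_cases h4 : i = q <;> simp_all [rad_not] <;> ring
  have hm1 : rad (xp m) = rad (x m) := by simp [hxp, hp.ne']
  have hm2 : rad (xq m) = rad (x m) := by simp [hxq, hq.ne']
  have hm3 : rad (xpq m) = rad (x m) := by simp [hxpq, hq.ne', hp.ne']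
  have hcoef : mixedCoeff K A B p q = ∑ j ∈ B, ∑ i ∈ A,
      ((if j = q then (if i = p then 1 else 0) else 0) +
          (if j = p then (if i = q then 1 else 0) else 0)) *
        permOn K (A.erase i) (B.erase j) := by
    simp only [add_mul, Finset.sum_add_distrib, ite_mul, one_mul, zero_mul, mixedCoeff]
    congr 1
    · by_cases hqB : q ∈ B <;> by_cases hpA : p ∈ A <;>
        simp [hqB, hpA, Finset.sum_ite_irrel]
    · by_cases hqB : p ∈ B <;> by_cases hpA : q ∈ A <;>
        simp [hqB, hpA, Finset.sum_ite_irrel]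
  rw [h.permOn_quadratic x hA hB, h.permOn_quadratic xp hA hB, h.permOn_quadratic xq hA hB,
    h.permOn_quadratic xpq hA hB, hm1, hm2, hm3, hcoef, Finset.mul_sum]
  simp only [Finset.mul_sum]
  have : ∀ a b c d e : ℝ, e + a - (e + b) - (e + c) + (e + d) = a - b - c + d := by
    intros; ring
  rw [this, ← Finset.sum_sub_distrib, ← Finset.sum_sub_distrib, ← Finset.sum_add_distrib]
  refine Finset.sum_congr rfl fun j _ => ?_
  rw [← Finset.sum_sub_distrib, ← Finset.sum_sub_distrib, ← Finset.sum_add_distrib]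
  refine Finset.sum_congr rfl fun i _ => ?_
  rw [← mul_assoc, ← key]
  ring

theorem IsStep.card_quadratic (h : IsStep K N m) {A B : Finset (Fin n)} {p q : Fin n} {μ : ℝ}
    (hA : ∀ i ∈ A, i < m) (hB : ∀ j ∈ B, j < m) (hp : p < m) (hq : q < m) (hpq : p ≠ q)
    (hμ : μ ≤ |mixedCoeff K A B p q|) :
    2 ^ n ≤ 4 * #{x : Fin n → Bool | μ ≤ |permOn (N x) (insert m A) (insert m B)|} := by
  classical
  set S : (Fin n → Bool) → Prop :=
    fun x => μ ≤ |permOn (N x) (insert m A) (insert m B)| with hS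
  let vp : Fin n → Bool := fun i => decide (i = p)
  let vq : Fin n → Bool := fun i => decide (i = q)
  let vpq : Fin n → Bool := fun i => decide (i = p ∨ i = q)
  have hcover : (Finset.univ : Finset (Fin n → Bool)) ⊆
      ((univ.filter fun x => S x) ∪ univ.filter fun x => S fun i => xor (x i) (vp i)) ∪
      ((univ.filter fun x => S fun i => xor (x i) (vq i)) ∪
        univ.filter fun x => S fun i => xor (x i) (vpq i)) := by
    intro x _
    simp only [Finset.mem_union, Finset.mem_filter, Finset.mem_univ, true_and]
    by_contra hcon
    simp only [not_or, hS, not_le] at hcon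
    obtain ⟨⟨h1, h2⟩, h3, h4⟩ := hcon
    have hd := h.mixed_difference hA hB hp hq hpq x (fun i => xor (x i) (vp i))
      (fun i => xor (x i) (vq i)) (fun i => xor (x i) (vpq i)) (fun _ => rfl) (fun _ => rfl)
      (fun _ => rfl)
    have habs : |4 * (rad (x p) * rad (x q)) * mixedCoeff K A B p q|
        = 4 * |mixedCoeff K A B p q| := by
      rw [abs_mul, abs_mul, abs_mul, abs_rad, abs_rad]
      norm_num
    rw [← hd] at habs
    rw [abs_lt] at h1 h2 h3 h4
    have : |permOn (N x) (insert m A) (insert m B)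
        - permOn (N fun i => xor (x i) (vp i)) (insert m A) (insert m B)
        - permOn (N fun i => xor (x i) (vq i)) (insert m A) (insert m B)
        + permOn (N fun i => xor (x i) (vpq i)) (insert m A) (insert m B)| < 4 * μ := by
      rw [abs_lt]
      constructor <;> linarith
    linarith
  have hc := (Finset.card_le_card hcover).trans ((Finset.card_union_le _ _).trans
    (Nat.add_le_add (Finset.card_union_le _ _) (Finset.card_union_le _ _)))
  rw [card_flip S, card_flip S, card_flip S, Finset.card_univ, Fintype.card_fun,
    Fintype.card_bool, Fintype.card_fin] at hc
  calc 2 ^ n ≤ _ := hc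
    _ = _ := by ring

/-- With probability at least `1/4` the new row and column can be used to add a prescribed
missing row `a` while gaining one column net, at the cost of a factor two. Either some
`x_a x_b` with `b` a missing column has a large coefficient, or else the exchange of `a` against
each of two missing columns `b₁`, `b₂` reverses the sign of the permanent approximately; the
contributions then add up in the coefficient of `x_{b₁} x_{b₂}`, with `a` becoming a missing
column. -/
theorem IsStep.card_decrement (h : IsStep K N m) {A B : Finset (Fin n)} {a b₁ b₂ : Fin n} {μ : ℝ}
    (hA : ∀ i ∈ A, i < m) (hB : ∀ j ∈ B, j < m) (ha : a < m) (haA : a ∉ A)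
    (hb₁ : b₁ < m) (hb₂ : b₂ < m) (hb₁B : b₁ ∉ B) (hb₂B : b₂ ∉ B) (hb : b₁ ≠ b₂)
    (hμ : 2 * μ ≤ |permOn K A B|) (hμ0 : 0 ≤ μ) :
    2 ^ n ≤ 4 * #{x : Fin n → Bool | ∃ B₁ : Finset (Fin n), (∀ j ∈ B₁, j < m) ∧
      #B₁ = #B + 1 ∧ μ ≤ |permOn (N x) (insert m (insert a A)) (insert m B₁)|} := by
  classical
  have hA1 : ∀ i ∈ insert a A, i < m := by
    intro i hi
    rcases Finset.mem_insert.1 hi with rfl | hi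
    exacts [ha, hA i hi]
  -- It suffices to exhibit one column set and one pair of variables with a large coefficient.
  have red : ∀ (B₁ : Finset (Fin n)) (p q : Fin n), (∀ j ∈ B₁, j < m) → #B₁ = #B + 1 → p < m →
      q < m → p ≠ q → μ ≤ |mixedCoeff K (insert a A) B₁ p q| →
      2 ^ n ≤ 4 * #{x : Fin n → Bool | ∃ B₁ : Finset (Fin n), (∀ j ∈ B₁, j < m) ∧
      #B₁ = #B + 1 ∧ μ ≤ |permOn (N x) (insert m (insert a A)) (insert m B₁)|} := by
    intro B₁ p q hB₁ hc hp hq hpq hμ'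
    refine (h.card_quadratic hA1 hB₁ hp hq hpq hμ').trans (Nat.mul_le_mul_left _
      (Finset.card_le_card ?_))
    intro x hx
    simp only [Finset.mem_filter, Finset.mem_univ, true_and] at hx ⊢
    exact ⟨B₁, hB₁, hc, hx⟩
  have hins : ∀ b, b < m → ∀ j ∈ insert b B, j < m := by
    intro b hb j hj
    rcases Finset.mem_insert.1 hj with rfl | hj
    exacts [hb, hB j hj]
  have heq : (insert a A).erase a = A := Finset.erase_insert haA
  have hbig : μ ≤ |permOn K A B| := by linarith
  -- The easy case: only one of the two exchanges contributes to the coefficient of `x_a x_b`.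
  have easy : ∀ b, b < m → b ∉ B → b ≠ a → (a ∉ B ∨ b ∉ A) →
      μ ≤ |mixedCoeff K (insert a A) (insert b B) a b| := by
    intro b hbm hbB hba hor
    have h1 : ¬ (a ∈ insert b B ∧ b ∈ insert a A) := by
      simp only [Finset.mem_insert]
      tauto
    rw [mixedCoeff, if_neg h1, if_pos (by simp), heq, Finset.erase_insert hbB, add_zero]
    exact hbig
  by_cases haB : a ∈ B
  · have hb₁a : b₁ ≠ a := fun e => hb₁B (e ▸ haB)
    have hb₂a : b₂ ≠ a := fun e => hb₂B (e ▸ haB)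
    by_cases c1 : μ ≤ |mixedCoeff K (insert a A) (insert b₁ B) a b₁|
    · exact red _ a b₁ (hins _ hb₁) (Finset.card_insert_of_notMem hb₁B) ha hb₁ hb₁a.symm c1
    by_cases c2 : μ ≤ |mixedCoeff K (insert a A) (insert b₂ B) a b₂|
    · exact red _ a b₂ (hins _ hb₂) (Finset.card_insert_of_notMem hb₂B) ha hb₂ hb₂a.symm c2
    have hb₁A : b₁ ∈ A := by
      by_contra hcon
      exact c1 (easy b₁ hb₁ hb₁B hb₁a (Or.inr hcon))
    have hb₂A : b₂ ∈ A := by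
      by_contra hcon
      exact c2 (easy b₂ hb₂ hb₂B hb₂a (Or.inr hcon))
    have co : ∀ b, b ∉ B → b ≠ a → b ∈ A → mixedCoeff K (insert a A) (insert b B) a b =
        permOn K A B + permOn K ((insert a A).erase b) (insert b (B.erase a)) := by
      intro b hbB hba hbA
      rw [mixedCoeff, if_pos (by simp), if_pos (by simp [haB, hbA]), heq,
        Finset.erase_insert hbB, Finset.erase_insert_of_ne hba]
    rw [co b₁ hb₁B hb₁a hb₁A] at c1
    rw [co b₂ hb₂B hb₂a hb₂A] at c2
    have n1 : b₁ ∉ insert b₂ (B.erase a) := by simp [hb, hb₁B]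
    have n2 : b₂ ∉ B.erase a := by simp [hb₂B]
    have n3 : b₁ ∉ B.erase a := by simp [hb₁B]
    refine red (insert b₁ (insert b₂ (B.erase a))) b₁ b₂ ?_ ?_ hb₁ hb₂ hb ?_
    · intro j hj
      simp only [Finset.mem_insert, Finset.mem_erase] at hj
      rcases hj with rfl | rfl | hj
      exacts [hb₁, hb₂, hB j hj.2]
    · rw [Finset.card_insert_of_notMem n1, Finset.card_insert_of_notMem n2,
        Finset.card_erase_of_mem haB]
      have := Finset.card_pos.2 ⟨a, haB⟩
      omega
    · rw [mixedCoeff, if_pos (by simp [hb₁A]), if_pos (by simp [hb₂A]),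
        Finset.erase_insert n1, Finset.erase_insert_of_ne hb, Finset.erase_insert n2]
      rw [not_le, abs_lt] at c1 c2
      rcases le_abs'.1 hμ with h0 | h0
      · exact le_abs.2 (Or.inl (by linarith))
      · exact le_abs.2 (Or.inr (by linarith))
  · -- Here one of the two missing columns is different from `a`.
    by_cases hb₁a : b₁ = a
    · have hb₂a : b₂ ≠ a := fun e => hb (hb₁a.trans e.symm)
      exact red _ a b₂ (hins _ hb₂) (Finset.card_insert_of_notMem hb₂B) ha hb₂ hb₂a.symm
        (easy b₂ hb₂ hb₂B hb₂a (Or.inl haB))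
    · exact red _ a b₁ (hins _ hb₁) (Finset.card_insert_of_notMem hb₁B) ha hb₁ (Ne.symm hb₁a)
        (easy b₁ hb₁ hb₁B hb₁a (Or.inl haB))

end step

/-! ### Averaging and a bound for processes with levels -/

/-- The average of `f` over the `m`-th vector of `ω`, the other vectors being kept. -/
noncomputable def avg (n m : ℕ) (f : (Fin n → Fin n → Bool) → ℝ) (ω : Fin n → Fin n → Bool) : ℝ :=
  if h : m < n then (∑ x : Fin n → Bool, f (Function.update ω ⟨m, h⟩ x)) / 2 ^ n else f ω

/-- The average of `f` over the vectors `m, …, m + t - 1` of `ω`: the conditional expectation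
of `f` given the remaining vectors. -/
noncomputable def avgs (n : ℕ) : ℕ → ℕ → ((Fin n → Fin n → Bool) → ℝ) →
    (Fin n → Fin n → Bool) → ℝ
  | 0, _, f => f
  | t + 1, m, f => avg n m (avgs n t (m + 1) f)

theorem sum_avg (n m : ℕ) (f : (Fin n → Fin n → Bool) → ℝ) :
    ∑ ω, avg n m f ω = ∑ ω, f ω := by
  classical
  unfold avg
  split_ifs with h
  · rw [← Finset.sum_div, div_eq_iff (by positivity), ← Fintype.sum_prod_type']
    -- Exchanging the `m`-th vector of `ω` with `x` is an involution on the pairs `(ω, x)`.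
    let F : ((Fin n → Fin n → Bool) × (Fin n → Bool)) → (Fin n → Fin n → Bool) × (Fin n → Bool) :=
      fun z => (Function.update z.1 ⟨m, h⟩ z.2, z.1 ⟨m, h⟩)
    have hF : Function.Involutive F := by
      rintro ⟨ω, x⟩
      simp [F]
    have hswap : ∑ z : (Fin n → Fin n → Bool) × (Fin n → Bool),
        f (Function.update z.1 ⟨m, h⟩ z.2) =
        ∑ z : (Fin n → Fin n → Bool) × (Fin n → Bool), f z.1 :=
      Fintype.sum_equiv hF.toPerm _ _ (fun z => rfl)
    rw [hswap, Fintype.sum_prod_type]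
    simp only [Finset.sum_const, Finset.card_univ, Fintype.card_fun, Fintype.card_bool,
      Fintype.card_fin, nsmul_eq_mul, Finset.sum_mul]
    refine Finset.sum_congr rfl fun ω _ => ?_
    push_cast
    ring
  · rfl

theorem sum_avgs (n t m : ℕ) (f : (Fin n → Fin n → Bool) → ℝ) :
    ∑ ω, avgs n t m f ω = ∑ ω, f ω := by
  induction t generalizing m with
  | zero => rfl
  | succ t ih => rw [avgs, sum_avg, ih]

theorem avg_le_one {n m : ℕ} {f : (Fin n → Fin n → Bool) → ℝ} (hf : ∀ ω, f ω ≤ 1)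
    (ω : Fin n → Fin n → Bool) : avg n m f ω ≤ 1 := by
  unfold avg
  split_ifs with h
  · rw [div_le_one (by positivity)]
    refine (Finset.sum_le_card_nsmul _ _ 1 fun x _ => hf _).trans ?_
    simp
  · exact hf ω

theorem avgs_le_one {n t : ℕ} {f : (Fin n → Fin n → Bool) → ℝ} (hf : ∀ ω, f ω ≤ 1) (m : ℕ)
    (ω : Fin n → Fin n → Bool) : avgs n t m f ω ≤ 1 := by
  induction t generalizing m ω with
  | zero => exact hf ω
  | succ t ih => exact avg_le_one (ih _) ω

/-- The weight of level `k` in the potential function controlling the process. -/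
noncomputable def weight (k : ℕ) : ℝ := if k = 0 then 0 else (4 / 3) ^ k

theorem weight_nonneg (k : ℕ) : 0 ≤ weight k := by
  unfold weight
  split_ifs <;> positivity

theorem weight_le (k : ℕ) : weight k ≤ (4 / 3) ^ k := by
  unfold weight
  split_ifs
  · positivity
  · exact le_rfl

theorem weight_succ (k : ℕ) : weight k ≤ 3 / 4 * weight (k + 1) := by
  refine (weight_le k).trans ?_
  rw [weight, if_neg (by omega), pow_succ]
  linarith

open Classical in
/-- A process on levels `0, 1, 2, …` which in each step is lost with probability at most `ε`,
and which from a positive level descends with probability at least `q`. If it has `t` steps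
left and is at level `k`, it fails to be at level `0` in the end with probability at most
`t ε + (4/3)^k (1 - q/4)^t`; a further loss `δ` accounts for what happens afterwards, as
described by `g`. The proof is a backward induction with an exponential potential. -/
theorem process_bound {n m₁ : ℕ} (Good : ℕ → ℕ → (Fin n → Fin n → Bool) → Prop) {ε q δ : ℝ}
    (hε : 0 ≤ ε) (hq1 : q ≤ 1) (hδ : 0 ≤ δ) (m₀ : ℕ) (hm₁ : m₁ ≤ n)
    (hneutral : ∀ (m : ℕ) (hm : m < n) (k : ℕ) (ω : Fin n → Fin n → Bool), m₀ ≤ m → m < m₁ →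
      Good m k ω →
      (#{x : Fin n → Bool | ¬ Good (m + 1) k (Function.update ω ⟨m, hm⟩ x)} : ℝ) ≤ ε * 2 ^ n)
    (hdesc : ∀ (m : ℕ) (hm : m < n) (k : ℕ) (ω : Fin n → Fin n → Bool), m₀ ≤ m → m < m₁ →
      Good m (k + 1) ω →
      q * 2 ^ n ≤ (#{x : Fin n → Bool | Good (m + 1) k (Function.update ω ⟨m, hm⟩ x)} : ℝ))
    {g : (Fin n → Fin n → Bool) → ℝ} (hg1 : ∀ ω, g ω ≤ 1)
    (hgδ : ∀ ω, Good m₁ 0 ω → g ω ≤ δ) (t m k : ℕ) (ω : Fin n → Fin n → Bool)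
    (hm₀ : m₀ ≤ m) (hmt : m + t = m₁) (hgood : Good m k ω) :
    avgs n t m g ω ≤ δ + t * ε + weight k * (1 - q / 4) ^ t := by
  induction t generalizing m k ω with
  | zero =>
    have hm : m = m₁ := by omega
    subst hm
    simp only [avgs, Nat.cast_zero, zero_mul, add_zero, pow_zero, mul_one]
    by_cases hk : k = 0
    · subst hk
      have := hgδ ω hgood
      simpa [weight] using this
    · have h1 : (1 : ℝ) ≤ (4 / 3 : ℝ) ^ k := one_le_pow₀ (by norm_num)
      have := hg1 ω
      rw [weight, if_neg hk]
      linarith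
  | succ t ih =>
    have hm : m < n := by omega
    have ih' := fun k x => ih (m + 1) k (Function.update ω ⟨m, hm⟩ x) (by omega) (by omega)
    have hle1 : ∀ x, avgs n t (m + 1) g (Function.update ω ⟨m, hm⟩ x) ≤ 1 :=
      fun x => avgs_le_one hg1 _ _
    have hr : (0 : ℝ) ≤ 1 - q / 4 := by linarith
    have hrt : (0 : ℝ) ≤ (1 - q / 4) ^ t := pow_nonneg hr t
    have hN := hneutral m hm k ω hm₀ (by omega) hgood
    have hpos : (0 : ℝ) < 2 ^ n := by positivity
    have htε : 0 ≤ (t : ℝ) * ε := by positivity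
    rw [avgs, avg, dif_pos hm, div_le_iff₀ hpos]
    have hcardX : ∀ c : ℝ, ∑ _x : Fin n → Bool, c = c * 2 ^ n := by
      intro c
      simp [mul_comm]
    rcases k with _ | k
    · have hb : ∀ x, avgs n t (m + 1) g (Function.update ω ⟨m, hm⟩ x) ≤ (δ + t * ε) +
          (if ¬ Good (m + 1) 0 (Function.update ω ⟨m, hm⟩ x) then (1 : ℝ) else 0) := by
        intro x
        by_cases hx : Good (m + 1) 0 (Function.update ω ⟨m, hm⟩ x)
        · have := ih' 0 x hx
          simp only [weight] at this
          simpa [hx] using this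
        · have := hle1 x
          simp only [hx, not_false_eq_true, if_true]
          linarith
      refine (Finset.sum_le_sum fun x _ => hb x).trans ?_
      rw [Finset.sum_add_distrib, hcardX, Finset.sum_boole]
      simp only [weight, if_true, zero_mul, add_zero, Nat.cast_add, Nat.cast_one]
      linarith
    · have hS := hdesc m hm k ω hm₀ (by omega) hgood
      set w := weight (k + 1) with hw
      have hw0 : 0 ≤ w := weight_nonneg _
      have hwk := weight_succ k
      have hwk0 := weight_nonneg k
      rw [← hw] at hwk
      set r := (1 - q / 4) ^ t with hrdef
      have hwr : weight k * r ≤ 3 / 4 * w * r := mul_le_mul_of_nonneg_right hwk hrt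
      have hb : ∀ x, avgs n t (m + 1) g (Function.update ω ⟨m, hm⟩ x) ≤ (δ + t * ε + w * r) +
          (if ¬ Good (m + 1) (k + 1) (Function.update ω ⟨m, hm⟩ x) then (1 : ℝ) else 0) -
          (w * r / 4) *
            (if Good (m + 1) k (Function.update ω ⟨m, hm⟩ x) then (1 : ℝ) else 0) := by
        intro x
        have hwr0 : 0 ≤ w * r := mul_nonneg hw0 hrt
        by_cases hx1 : Good (m + 1) k (Function.update ω ⟨m, hm⟩ x)
        · have h1 := ih' k x hx1
          have h2 : (0 : ℝ) ≤
              (if ¬ Good (m + 1) (k + 1) (Function.update ω ⟨m, hm⟩ x) then (1 : ℝ) else 0) := by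
            split_ifs <;> norm_num
          rw [if_pos hx1]
          linarith
        · rw [if_neg hx1]
          by_cases hx : Good (m + 1) (k + 1) (Function.update ω ⟨m, hm⟩ x)
          · have := ih' (k + 1) x hx
            rw [if_neg (not_not.2 hx)]
            linarith
          · have := hle1 x
            rw [if_pos hx]
            linarith
      refine (Finset.sum_le_sum fun x _ => hb x).trans ?_
      rw [Finset.sum_sub_distrib, Finset.sum_add_distrib, hcardX, Finset.sum_boole, ← Finset.mul_sum,
        Finset.sum_boole]
      have h3 : w * r / 4 * (q * 2 ^ n) ≤ w * r / 4 *
          (#{x : Fin n → Bool | Good (m + 1) k (Function.update ω ⟨m, hm⟩ x)} : ℝ) :=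
        mul_le_mul_of_nonneg_left hS (by positivity)
      rw [pow_succ, ← hrdef]
      push_cast
      nlinarith

/-! ### Heavy column sets and the phases of the process -/

/-- The rows `s, …, m - 1` (counting from `0`). -/
def rowsOf (n s m : ℕ) : Finset (Fin n) := univ.filter fun i => s ≤ (i : ℕ) ∧ (i : ℕ) < m

/-- The columns below `d` that are missing from `B`. -/
def missing {n : ℕ} (d : ℕ) (B : Finset (Fin n)) : Finset (Fin n) :=
  univ.filter fun j => (j : ℕ) < d ∧ j ∉ B

/-- `B` is a set of `m - s` columns below `m` for which the rows `s, …, m - 1` of `N` give a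
permanent of absolute value at least `μ`; the number `s` is the deficit. -/
def HeavyCols {n : ℕ} (N : Matrix (Fin n) (Fin n) ℝ) (μ : ℝ) (m s : ℕ)
    (B : Finset (Fin n)) : Prop :=
  (∀ j ∈ B, (j : ℕ) < m) ∧ #B + s = m ∧ μ ≤ |permOn N (rowsOf n s m) B|

/-- The matrix `N` admits a heavy column set at time `m` with deficit `s`. -/
def HasHeavy {n : ℕ} (N : Matrix (Fin n) (Fin n) ℝ) (μ : ℝ) (m s : ℕ) : Prop :=
  ∃ B, HeavyCols N μ m s B

/-- The matrix `N` admits a heavy column set at time `m` with deficit `s` that misses at most `k`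
of the columns below `d`. -/
def HasFilled {n : ℕ} (N : Matrix (Fin n) (Fin n) ℝ) (μ : ℝ) (m s d k : ℕ) : Prop :=
  ∃ B, HeavyCols N μ m s B ∧ #(missing d B) ≤ k

theorem mem_rowsOf {n s m : ℕ} {i : Fin n} : i ∈ rowsOf n s m ↔ s ≤ (i : ℕ) ∧ (i : ℕ) < m := by
  simp [rowsOf]

theorem mem_missing {n d : ℕ} {B : Finset (Fin n)} {j : Fin n} :
    j ∈ missing d B ↔ (j : ℕ) < d ∧ j ∉ B := by
  simp [missing]

theorem rowsOf_succ {n s m : ℕ} (hm : m < n) (hs : s ≤ m) :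
    rowsOf n s (m + 1) = insert ⟨m, hm⟩ (rowsOf n s m) := by
  ext i
  simp only [Finset.mem_insert, mem_rowsOf, Fin.ext_iff]
  omega

theorem rowsOf_pred {n s m : ℕ} (hm : m < n) (hs : s < m) :
    rowsOf n s m = insert ⟨s, hs.trans hm⟩ (rowsOf n (s + 1) m) := by
  ext i
  simp only [Finset.mem_insert, mem_rowsOf, Fin.ext_iff]
  omega

theorem card_missing {n m s : ℕ} (hm : m ≤ n) {B : Finset (Fin n)} (hB : ∀ j ∈ B, (j : ℕ) < m)
    (hc : #B + s = m) : #(missing m B) = s := by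
  have h1 : missing m B = (univ.filter fun j : Fin n => (j : ℕ) < m) \ B := by
    ext j
    simp [mem_missing]
  have h2 : B ⊆ univ.filter fun j : Fin n => (j : ℕ) < m := by
    intro j hj
    simpa using hB j hj
  have h3 : #(univ.filter fun j : Fin n => (j : ℕ) < m) = m := by
    rw [Fin.card_filter_val_lt]
    omega
  rw [h1, Finset.card_sdiff_of_subset h2, h3]
  omega

section growth

variable {n : ℕ} {K : Matrix (Fin n) (Fin n) ℝ}
  {N : (Fin n → Bool) → Matrix (Fin n) (Fin n) ℝ} {m : ℕ} {hm : m < n}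

/-- Adding the new row and an old missing column. -/
theorem heavyCols_insert {K : Matrix (Fin n) (Fin n) ℝ} {μ : ℝ} {s : ℕ} {B : Finset (Fin n)}
    (hB : ∀ j ∈ B, (j : ℕ) < m) (hc : #B + s = m) {b : Fin n}
    (hb : b ∈ missing m B)
    (h : μ ≤ |permOn K (insert ⟨m, hm⟩ (rowsOf n s m)) (insert b B)|) :
    HeavyCols K μ (m + 1) s (insert b B) := by
  rw [mem_missing] at hb
  refine ⟨?_, ?_, ?_⟩
  · intro j hj
    rcases Finset.mem_insert.1 hj with rfl | hj
    · exact hb.1.trans (Nat.lt_succ_self m)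
    · exact (hB j hj).trans (Nat.lt_succ_self m)
  · rw [Finset.card_insert_of_notMem hb.2]
    omega
  · rwa [rowsOf_succ hm (by omega)]

open Classical in
/-- A version of `IsStep.card_neutral` for any set `T` of old missing columns. -/
theorem IsStep.heavyCols_neutral (h : IsStep K N ⟨m, hm⟩) {μ : ℝ} {s : ℕ} {B : Finset (Fin n)}
    (hB : HeavyCols K μ m s B) {T : Finset (Fin n)} (hT : T ⊆ missing m B) :
    (#{x : Fin n → Bool | ¬ ∃ b ∈ T, HeavyCols (N x) μ (m + 1) s (insert b B)} : ℝ)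
      ≤ (1 / 2) ^ #T * 2 ^ n := by
  obtain ⟨hB1, hB2, hB3⟩ := hB
  have h1 := h.card_neutral (A := rowsOf n s m) (B := B) (T := T) (μ := μ)
    (fun i hi => Fin.lt_def.2 (mem_rowsOf.1 hi).2) (fun j hj => Fin.lt_def.2 (hB1 j hj))
    (fun j hj => Fin.lt_def.2 (mem_missing.1 (hT hj)).1) (fun j hj => (mem_missing.1 (hT hj)).2)
    hB3
  have h2 : #{x : Fin n → Bool | ¬ ∃ b ∈ T, HeavyCols (N x) μ (m + 1) s (insert b B)} * 2 ^ #T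
      ≤ 2 ^ n := by
    refine (Nat.mul_le_mul_right _ (Finset.card_le_card ?_)).trans h1
    intro x
    simp only [Finset.mem_filter, Finset.mem_univ, true_and]
    rintro hx ⟨b, hbT, hb⟩
    exact hx ⟨b, hbT, heavyCols_insert hB1 hB2 (hT hbT) hb⟩
  have h3 : (#{x : Fin n → Bool | ¬ ∃ b ∈ T, HeavyCols (N x) μ (m + 1) s (insert b B)} : ℝ)
      * 2 ^ #T ≤ 2 ^ n := by exact_mod_cast h2
  rw [one_div, inv_pow, inv_mul_eq_div, le_div_iff₀ (by positivity)]
  exact h3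

open Classical in
/-- With probability at least `1/4` the deficit drops by one, at the cost of a factor two. -/
theorem IsStep.heavyCols_desc (h : IsStep K N ⟨m, hm⟩) {μ : ℝ} (hμ : 0 ≤ μ) {s : ℕ} (hs : 1 ≤ s)
    {B : Finset (Fin n)} (hB : HeavyCols K (2 * μ) m (s + 1) B) :
    (1 / 4 : ℝ) * 2 ^ n ≤ #{x : Fin n → Bool | HasHeavy (N x) μ (m + 1) s} := by
  obtain ⟨hB1, hB2, hB3⟩ := hB
  have hmis := card_missing hm.le hB1 hB2
  obtain ⟨b₁, hb₁, b₂, hb₂, hb⟩ := Finset.one_lt_card.1 (show 1 < #(missing m B) by omega)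
  rw [mem_missing] at hb₁ hb₂
  have hsm : s < m := by omega
  have h1 := h.card_decrement (A := rowsOf n (s + 1) m) (B := B) (a := ⟨s, hsm.trans hm⟩)
    (b₁ := b₁) (b₂ := b₂) (μ := μ)
    (fun i hi => Fin.lt_def.2 (mem_rowsOf.1 hi).2) (fun j hj => Fin.lt_def.2 (hB1 j hj))
    (Fin.lt_def.2 hsm) (by simp [mem_rowsOf]) (Fin.lt_def.2 hb₁.1) (Fin.lt_def.2 hb₂.1)
    hb₁.2 hb₂.2 hb hB3 hμ
  have h2 : 2 ^ n ≤ 4 * #{x : Fin n → Bool | HasHeavy (N x) μ (m + 1) s} := by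
    refine h1.trans (Nat.mul_le_mul_left _ (Finset.card_le_card ?_))
    intro x
    simp only [Finset.mem_filter, Finset.mem_univ, true_and]
    rintro ⟨B₁, hlt, hc, hx⟩
    refine ⟨insert ⟨m, hm⟩ B₁, ?_, ?_, ?_⟩
    · intro j hj
      rcases Finset.mem_insert.1 hj with rfl | hj
      · exact Nat.lt_succ_self m
      · exact (Fin.lt_def.1 (hlt j hj)).trans (Nat.lt_succ_self m)
    · rw [Finset.card_insert_of_notMem fun hmem => lt_irrefl _ (hlt _ hmem)]
      omega
    · rwa [rowsOf_succ hm hsm.le, rowsOf_pred hm hsm]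
  have h3 : (2 : ℝ) ^ n ≤ 4 * (#{x : Fin n → Bool | HasHeavy (N x) μ (m + 1) s} : ℝ) := by
    exact_mod_cast h2
  linarith

end growth

section phases

variable {n n₁ : ℕ} {N : (Fin n → Fin n → Bool) → Matrix (Fin n) (Fin n) ℝ}

/-- Lowering the deficit from `s₀ + k` to `s₀`; with deficit `s` the permanent has absolute value
at least `θ 2^s`. -/
theorem phase_deficit
    (hN : ∀ (m : ℕ) (hm : m < n), n₁ ≤ m → ∀ ω,
      IsStep (N ω) (fun x => N (Function.update ω ⟨m, hm⟩ x)) ⟨m, hm⟩)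
    {θ : ℝ} (hθ : 0 ≤ θ) {s₀ : ℕ} (hs₀ : 1 ≤ s₀)
    {g : (Fin n → Fin n → Bool) → ℝ} (hg1 : ∀ ω, g ω ≤ 1) {δ : ℝ} (hδ : 0 ≤ δ) (t m k : ℕ)
    (hmt : m + t ≤ n) (hm : n₁ ≤ m)
    (hgδ : ∀ ω, HasHeavy (N ω) (θ * 2 ^ s₀) (m + t) s₀ → g ω ≤ δ)
    (ω : Fin n → Fin n → Bool)
    (hstart : HasHeavy (N ω) (θ * 2 ^ (s₀ + k)) m (s₀ + k)) :
    avgs n t m g ω ≤ δ + t * (1 / 2) ^ s₀ + (4 / 3) ^ k * (15 / 16) ^ t := by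
  classical
  have hmain := process_bound (n := n) (m₁ := m + t)
    (fun m k ω => HasHeavy (N ω) (θ * 2 ^ (s₀ + k)) m (s₀ + k))
    (ε := (1 / 2) ^ s₀) (q := 1 / 4) (δ := δ) (by positivity) (by norm_num) hδ m hmt
    ?_ ?_ hg1 hgδ t m k ω le_rfl rfl hstart
  · refine hmain.trans ?_
    have h1 : (1 - 1 / 4 / 4 : ℝ) = 15 / 16 := by norm_num
    rw [h1]
    have := mul_le_mul_of_nonneg_right (weight_le k) (show (0 : ℝ) ≤ (15 / 16) ^ t by positivity)
    linarith
  · rintro m' hm' k ω hle - ⟨B, hB⟩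
    have h1 := (hN m' hm' (hm.trans hle) ω).heavyCols_neutral hB (Finset.Subset.refl _)
    rw [card_missing hm'.le hB.1 hB.2.1] at h1
    have h2 : ((1 / 2 : ℝ)) ^ (s₀ + k) * 2 ^ n ≤ (1 / 2) ^ s₀ * 2 ^ n := by
      refine mul_le_mul_of_nonneg_right ?_ (by positivity)
      exact pow_le_pow_of_le_one (by norm_num) (by norm_num) (by omega)
    refine le_trans (Nat.cast_le.2 (Finset.card_le_card ?_)) (h1.trans h2)
    intro x
    simp only [Finset.mem_filter, Finset.mem_univ, true_and]
    rintro hx ⟨b, -, hb⟩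
    exact hx ⟨_, hb⟩
  · rintro m' hm' k ω hle - ⟨B, hB⟩
    refine (hN m' hm' (hm.trans hle) ω).heavyCols_desc (s := s₀ + k) (by positivity) (by omega)
      (B := B) ?_
    have : 2 * (θ * 2 ^ (s₀ + k)) = θ * 2 ^ (s₀ + (k + 1)) := by
      rw [← add_assoc, pow_succ]
      ring
    rw [this]
    exact hB

/-- Filling the columns below `d` while the deficit remains `s`. -/
theorem phase_fill
    (hN : ∀ (m : ℕ) (hm : m < n), n₁ ≤ m → ∀ ω,
      IsStep (N ω) (fun x => N (Function.update ω ⟨m, hm⟩ x)) ⟨m, hm⟩)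
    {μ : ℝ} {s : ℕ} (hs : 1 ≤ s) {d : ℕ}
    {g : (Fin n → Fin n → Bool) → ℝ} (hg1 : ∀ ω, g ω ≤ 1) {δ : ℝ} (hδ : 0 ≤ δ) (t m k : ℕ)
    (hmt : m + t ≤ n) (hm : n₁ ≤ m) (hd : d ≤ m)
    (hgδ : ∀ ω, HasFilled (N ω) μ (m + t) s d 0 → g ω ≤ δ)
    (ω : Fin n → Fin n → Bool)
    (hstart : HasFilled (N ω) μ m s d k) :
    avgs n t m g ω ≤ δ + t * (1 / 2) ^ s + (4 / 3) ^ k * (7 / 8) ^ t := by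
  classical
  have hmono : ∀ (b : Fin n) (B : Finset (Fin n)), missing d (insert b B) ⊆ missing d B := by
    intro b B j hj
    rw [mem_missing] at hj ⊢
    exact ⟨hj.1, fun hjB => hj.2 (Finset.mem_insert_of_mem hjB)⟩
  -- Some missing column can be filled, except with probability `2 ^ (-s)`.
  have hneutral : ∀ (m' : ℕ) (hm' : m' < n) (k : ℕ) (ω : Fin n → Fin n → Bool), m ≤ m' →
      HasFilled (N ω) μ m' s d k →
      (#{x : Fin n → Bool | ¬ HasFilled (N (Function.update ω ⟨m', hm'⟩ x)) μ (m' + 1) s d k} : ℝ) ≤ (1 / 2) ^ s * 2 ^ n := by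
    rintro m' hm' k ω hle ⟨B, hB, hk⟩
    have h1 := (hN m' hm' (hm.trans hle) ω).heavyCols_neutral hB (Finset.Subset.refl _)
    rw [card_missing hm'.le hB.1 hB.2.1] at h1
    refine le_trans (Nat.cast_le.2 (Finset.card_le_card ?_)) h1
    intro x
    simp only [Finset.mem_filter, Finset.mem_univ, true_and]
    rintro hx ⟨b, -, hb⟩
    exact hx ⟨_, hb, (Finset.card_le_card (hmono b B)).trans hk⟩
  have hcompl : ∀ S : (Fin n → Bool) → Prop,
      (#{x : Fin n → Bool | S x} : ℝ) + #{x : Fin n → Bool | ¬ S x} = 2 ^ n := by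
    intro S
    have := Finset.card_filter_add_card_filter_not (s := (univ : Finset (Fin n → Bool))) S
    rw [Finset.card_univ, Fintype.card_fun, Fintype.card_bool, Fintype.card_fin] at this
    exact_mod_cast this
  have hpos : (0 : ℝ) < 2 ^ n := by positivity
  have hmain := process_bound (n := n) (m₁ := m + t)
    (fun m k ω => HasFilled (N ω) μ m s d k)
    (ε := (1 / 2) ^ s) (q := 1 / 2) (δ := δ) (by positivity) (by norm_num) hδ m hmt
    (fun m' hm' k ω hle _ h => hneutral m' hm' k ω hle h) ?_ hg1 hgδ t m k ω le_rfl rfl hstart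
  · refine hmain.trans ?_
    have h1 : (1 - 1 / 2 / 4 : ℝ) = 7 / 8 := by norm_num
    rw [h1]
    have := mul_le_mul_of_nonneg_right (weight_le k) (show (0 : ℝ) ≤ (7 / 8) ^ t by positivity)
    linarith
  · rintro m' hm' k ω hle - ⟨B, hB, hk⟩
    -- It suffices to bound the complement by one half.
    suffices hhalf : (#{x : Fin n → Bool |
        ¬ HasFilled (N (Function.update ω ⟨m', hm'⟩ x)) μ (m' + 1) s d k} : ℝ) ≤ 1 / 2 * 2 ^ n by
      have := hcompl fun x => HasFilled (N (Function.update ω ⟨m', hm'⟩ x)) μ (m' + 1) s d k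
      linarith
    rcases (missing d B).eq_empty_or_nonempty with hemp | ⟨b, hb⟩
    · refine (hneutral m' hm' k ω hle ⟨B, hB, by simp [hemp]⟩).trans ?_
      refine mul_le_mul_of_nonneg_right ?_ hpos.le
      calc (1 / 2 : ℝ) ^ s ≤ (1 / 2) ^ 1 :=
            pow_le_pow_of_le_one (by norm_num) (by norm_num) hs
        _ = 1 / 2 := pow_one _
    · have hbm := mem_missing.1 hb
      have h1 := (hN m' hm' (hm.trans hle) ω).heavyCols_neutral hB (T := {b})
        (Finset.singleton_subset_iff.2 (mem_missing.2 ⟨by omega, hbm.2⟩))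
      rw [Finset.card_singleton, pow_one] at h1
      refine le_trans (Nat.cast_le.2 (Finset.card_le_card ?_)) h1
      intro x
      simp only [Finset.mem_filter, Finset.mem_univ, true_and]
      rintro hx ⟨b', hb', hheavy⟩
      rw [Finset.mem_singleton] at hb'
      subst hb'
      refine hx ⟨_, hheavy, ?_⟩
      have hlt : #(missing d (insert b' B)) < #(missing d B) := by
        refine Finset.card_lt_card ⟨hmono b' B, fun hsub => ?_⟩
        exact (mem_missing.1 (hsub hb)).2 (Finset.mem_insert_self _ _)
      omega

end phases

/-! ### Numerical bounds and the random symmetric extension -/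

theorem poly_le_pow {L : ℕ} (hL : 100 ≤ L) : 5 * (L : ℝ) ^ 2 + 3 * L ≤ (9 / 5) ^ L := by
  induction L, hL using Nat.le_induction with
  | base => norm_num
  | succ k hk ih =>
    have hk' : (100 : ℝ) ≤ k := by exact_mod_cast hk
    rw [pow_succ (9 / 5 : ℝ) k]
    push_cast
    nlinarith

/-- The total failure probability of the three phases is polynomially small in `n`. -/
theorem failure_bound {n L R : ℕ} (hn : 0 < n) (hL : 100 ≤ L) (hlog : Real.log n / 20 < L)
    (hLR : L ^ 2 < R) (hR : 8 * R ≤ n) :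
    ((0 + ((3 * L : ℕ) : ℝ) * (1 / 2) ^ L + (4 / 3) ^ L * (7 / 8) ^ (3 * L)) +
      ((5 * L ^ 2 : ℕ) : ℝ) * (1 / 2) ^ L + (4 / 3) ^ (L ^ 2 - L) * (15 / 16) ^ (5 * L ^ 2)) +
      ((8 * R : ℕ) : ℝ) * (1 / 2) ^ (L ^ 2) + (4 / 3) ^ (R - L ^ 2) * (15 / 16) ^ (8 * R)
      ≤ 1 / 8 * (n : ℝ) ^ (-(-Real.log (19 / 20) / 20)) := by
  have hLR' : L ≤ R := by nlinarith
  -- Every summand is at most `(9/10)^L`.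
  have e1 : ((3 * L : ℕ) : ℝ) * (1 / 2) ^ L + ((5 * L ^ 2 : ℕ) : ℝ) * (1 / 2) ^ L ≤ (9 / 10) ^ L := by
    have h1 : (9 / 10 : ℝ) ^ L = (9 / 5) ^ L * (1 / 2) ^ L := by
      rw [← mul_pow]
      norm_num
    rw [h1, ← add_mul]
    refine mul_le_mul_of_nonneg_right ?_ (by positivity)
    have := poly_le_pow hL
    push_cast
    linarith
  have e2 : (4 / 3 : ℝ) ^ L * (7 / 8) ^ (3 * L) ≤ (9 / 10) ^ L := by
    rw [pow_mul, ← mul_pow]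
    exact pow_le_pow_left₀ (by norm_num) (by norm_num) L
  have e3 : (4 / 3 : ℝ) ^ (L ^ 2 - L) * (15 / 16) ^ (5 * L ^ 2) ≤ (9 / 10) ^ L := by
    calc (4 / 3 : ℝ) ^ (L ^ 2 - L) * (15 / 16) ^ (5 * L ^ 2)
        ≤ (4 / 3 : ℝ) ^ (L ^ 2) * (15 / 16) ^ (5 * L ^ 2) := by
          refine mul_le_mul_of_nonneg_right ?_ (by positivity)
          exact pow_le_pow_right₀ (by norm_num) (Nat.sub_le _ _)
      _ = (4 / 3 * (15 / 16) ^ 5 : ℝ) ^ (L ^ 2) := by rw [pow_mul (15 / 16 : ℝ), ← mul_pow]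
      _ ≤ (97 / 100 : ℝ) ^ (L ^ 2) := pow_le_pow_left₀ (by norm_num) (by norm_num) _
      _ ≤ (97 / 100 : ℝ) ^ (4 * L) :=
          pow_le_pow_of_le_one (by norm_num) (by norm_num) (by nlinarith)
      _ = ((97 / 100) ^ 4 : ℝ) ^ L := pow_mul _ _ _
      _ ≤ (9 / 10) ^ L := pow_le_pow_left₀ (by norm_num) (by norm_num) _
  have e4 : (4 / 3 : ℝ) ^ (R - L ^ 2) * (15 / 16) ^ (8 * R) ≤ (9 / 10) ^ L := by
    calc (4 / 3 : ℝ) ^ (R - L ^ 2) * (15 / 16) ^ (8 * R)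
        ≤ (4 / 3 : ℝ) ^ R * (15 / 16) ^ (8 * R) := by
          refine mul_le_mul_of_nonneg_right ?_ (by positivity)
          exact pow_le_pow_right₀ (by norm_num) (Nat.sub_le _ _)
      _ = (4 / 3 * (15 / 16) ^ 8 : ℝ) ^ R := by rw [pow_mul (15 / 16 : ℝ), ← mul_pow]
      _ ≤ (9 / 10 : ℝ) ^ R := pow_le_pow_left₀ (by norm_num) (by norm_num) _
      _ ≤ (9 / 10 : ℝ) ^ L := pow_le_pow_of_le_one (by norm_num) (by norm_num) hLR'
  have hn' : (0 : ℝ) < n := by exact_mod_cast hn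
  have hlog' : Real.log n ≤ 20 * L := by linarith
  have e5 : ((8 * R : ℕ) : ℝ) * (1 / 2) ^ (L ^ 2) ≤ (9 / 10) ^ L := by
    have h1 : (n : ℝ) ≤ 2 ^ (40 * L) := by
      rw [← Real.exp_log hn']
      calc Real.exp (Real.log n) ≤ Real.exp ((20 * L : ℕ) * 1) := by
            refine Real.exp_le_exp.2 ?_
            push_cast
            linarith
        _ = Real.exp 1 ^ (20 * L) := by rw [Real.exp_nat_mul]
        _ ≤ (2 ^ 2 : ℝ) ^ (20 * L) := by
            refine pow_le_pow_left₀ (Real.exp_pos _).le ?_ _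
            have := Real.exp_one_lt_d9
            linarith
        _ = 2 ^ (40 * L) := by rw [← pow_mul]; ring_nf
    have h2 : ((8 * R : ℕ) : ℝ) ≤ n := by exact_mod_cast hR
    calc ((8 * R : ℕ) : ℝ) * (1 / 2) ^ (L ^ 2) ≤ 2 ^ (40 * L) * (1 / 2) ^ (L ^ 2) :=
          mul_le_mul_of_nonneg_right (h2.trans h1) (by positivity)
      _ ≤ 2 ^ (40 * L) * (1 / 2) ^ (40 * L + L) := by
          refine mul_le_mul_of_nonneg_left ?_ (by positivity)
          exact pow_le_pow_of_le_one (by norm_num) (by norm_num) (by nlinarith)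
      _ = (1 / 2) ^ L := by
          rw [pow_add, ← mul_assoc, ← mul_pow]
          norm_num
      _ ≤ (9 / 10) ^ L := pow_le_pow_left₀ (by norm_num) (by norm_num) _
  have e6 : 40 * (9 / 10 : ℝ) ^ L ≤ (19 / 20) ^ L := by
    have h1 : (19 / 20 : ℝ) ^ L = (19 / 18) ^ L * (9 / 10) ^ L := by
      rw [← mul_pow]
      norm_num
    rw [h1]
    refine mul_le_mul_of_nonneg_right ?_ (by positivity)
    calc (40 : ℝ) ≤ (19 / 18) ^ 100 := by norm_num
      _ ≤ (19 / 18) ^ L := pow_le_pow_right₀ (by norm_num) hL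
  have e7 : (19 / 20 : ℝ) ^ L ≤ (n : ℝ) ^ (-(-Real.log (19 / 20) / 20)) := by
    rw [Real.rpow_def_of_pos hn', ← Real.rpow_natCast, Real.rpow_def_of_pos (by norm_num)]
    refine Real.exp_le_exp.2 ?_
    have hneg : Real.log (19 / 20) < 0 := Real.log_neg (by norm_num) (by norm_num)
    nlinarith
  linarith

theorem extSym_isStep {n' n : ℕ} (M : Matrix (Fin n') (Fin n') ℝ) (m : ℕ) (hm : m < n)
    (hn' : n' ≤ m) (ω : Fin n → Fin n → Bool) :
    IsStep (extSym n M fun i j => ω j i)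
      (fun x => extSym n M fun i j => Function.update ω ⟨m, hm⟩ x j i) ⟨m, hm⟩ := by
  refine ⟨?_, ?_, ?_⟩
  · intro x i j hi hj
    simp only [extSym, Function.update_of_ne hi.ne, Function.update_of_ne hj.ne]
  · intro x j hj
    have h1 : ¬ (m < n' ∧ (j : ℕ) < n') := by omega
    rw [extSym, dif_neg h1]
    split_ifs with h2
    · have : j = ⟨m, hm⟩ := le_antisymm hj h2
      subst this
      simp
    · simp
  · intro x i hi
    have h1 : ¬ ((i : ℕ) < n' ∧ m < n') := by omega
    rw [extSym, dif_neg h1, if_pos hi]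
    simp

theorem permOn_extSym {n' n : ℕ} (h : n' ≤ n) (M : Matrix (Fin n') (Fin n') ℝ)
    (ω : Fin n → Fin n → Bool) (R : ℕ) (B : Finset (Fin n')) :
    permOn (extSym n M ω) (rowsOf n R n') (B.map (Fin.castLEEmb h)) =
      permOn M (univ.filter fun i : Fin n' => R ≤ (i : ℕ)) B := by
  have hrows : rowsOf n R n' =
      (univ.filter fun i : Fin n' => R ≤ (i : ℕ)).map (Fin.castLEEmb h) := by
    ext i
    simp only [mem_rowsOf, Finset.mem_map, Finset.mem_filter, Finset.mem_univ, true_and]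
    constructor
    · rintro ⟨h1, h2⟩
      exact ⟨⟨i, h2⟩, h1, rfl⟩
    · rintro ⟨j, hj, rfl⟩
      exact ⟨hj, j.2⟩
  rw [hrows]
  symm
  refine permOn_transport _ _ (Finset.equivMap _ _) (Finset.equivMap _ _) ?_
  intro i j
  have h1 : ((((univ.filter fun i : Fin n' => R ≤ (i : ℕ)).equivMap (Fin.castLEEmb h)) i).1 : ℕ)
      = i.1 := rfl
  have h2 : (((B.equivMap (Fin.castLEEmb h)) j).1 : ℕ) = j.1 := rfl
  rw [extSym, dif_pos ⟨by rw [h1]; exact i.1.2, by rw [h2]; exact j.1.2⟩]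
  rfl

/-- "Filling out" a single heavy submatrix: there is an absolute constant `c > 0` such that
for all sufficiently large `n`, given `λ > 0` and integers `L, R` with
`(log n)/20 < L < L² < R < (n - 5L² - 3L)/9`, setting `n' = n - 8R - 5L² - 3L` and
`λ' = λ/2^(R-L)`: conditionally on any symmetric `±1` outcome of `M_{n'}` having a subset
`B` of size `n' - R` with `M_{n'}[{R+1,…,n'}, B]` being `λ`-heavy, with probability at
least `1 - (1/8)·n^(-c)` over the random extension to size `n` there is a set `B'` of size
`n - L` containing `{1,…,n-3L}` such that `M_n[{L+1,…,n}, B']` is `λ'`-heavy. -/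
theorem grow_single_minor_end :
    ∃ c : ℝ, 0 < c ∧ ∃ n₀ : ℕ, ∀ n : ℕ, n₀ ≤ n → ∀ lam : ℝ, 0 < lam →
      ∀ L R : ℕ, Real.log n / 20 < (L : ℝ) → L < L ^ 2 → L ^ 2 < R →
        (R : ℝ) < ((n : ℝ) - 5 * L ^ 2 - 3 * L) / 9 →
        ∀ M : Matrix (Fin (n - 8 * R - 5 * L ^ 2 - 3 * L))
            (Fin (n - 8 * R - 5 * L ^ 2 - 3 * L)) ℝ,
          M.IsSymm → (∀ i j, M i j = 1 ∨ M i j = -1) →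
          (∃ B : Finset (Fin (n - 8 * R - 5 * L ^ 2 - 3 * L)),
            B.card = n - 8 * R - 5 * L ^ 2 - 3 * L - R ∧
            lam ≤ |permOn M
              (univ.filter fun i : Fin (n - 8 * R - 5 * L ^ 2 - 3 * L) => R ≤ (i : ℕ))
              B|) →
          1 - (1 / 8) * (n : ℝ) ^ (-c) ≤
            probExt n M fun Mn => ∃ B' : Finset (Fin n),
              B'.card = n - L ∧ (∀ i : Fin n, (i : ℕ) < n - 3 * L → i ∈ B') ∧
              lam / 2 ^ (R - L) ≤
                |permOn Mn (univ.filter fun i : Fin n => L ≤ (i : ℕ)) B'| := by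
  refine ⟨-Real.log (19 / 20) / 20, ?_, ⌈Real.exp 2000⌉₊, ?_⟩
  · have := Real.log_neg (show (0 : ℝ) < 19 / 20 by norm_num) (by norm_num)
    linarith
  intro n hn lam hlam L R hlog _ hLR hRn M _ _ hB
  have hexp : Real.exp 2000 ≤ n := Nat.ceil_le.1 hn
  have hnpos : (0 : ℝ) < n := (Real.exp_pos _).trans_le hexp
  have hL100 : 100 ≤ L := by
    have h1 : (2000 : ℝ) ≤ Real.log n := (Real.le_log_iff_exp_le hnpos).2 hexp
    have h2 : (100 : ℝ) < L := by linarith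
    exact_mod_cast h2.le
  have hsize : 9 * R + 5 * L ^ 2 + 3 * L < n := by
    have h1 : 9 * (R : ℝ) + 5 * L ^ 2 + 3 * L < n := by linarith
    exact_mod_cast h1
  have hLL : L ≤ L ^ 2 := by nlinarith
  obtain ⟨B, hBc, hBheavy⟩ := hB
  have hn' : n - 8 * R - 5 * L ^ 2 - 3 * L + 8 * R + 5 * L ^ 2 + 3 * L = n := by omega
  have hRn' : R ≤ n - 8 * R - 5 * L ^ 2 - 3 * L := by omega
  generalize n - 8 * R - 5 * L ^ 2 - 3 * L = n' at *
  set N : (Fin n → Fin n → Bool) → Matrix (Fin n) (Fin n) ℝ :=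
    fun ω => extSym n M fun i j => ω j i with hNdef
  have hN : ∀ (m : ℕ) (hm : m < n), n' ≤ m → ∀ ω,
      IsStep (N ω) (fun x => N (Function.update ω ⟨m, hm⟩ x)) ⟨m, hm⟩ :=
    fun m hm hle ω => extSym_isStep M m hm hle ω
  set θ : ℝ := lam / 2 ^ R with hθdef
  have hθ : 0 ≤ θ := by positivity
  have hθR : θ * 2 ^ R = lam := div_mul_cancel₀ _ (by positivity)
  have hθL : θ * 2 ^ L = lam / 2 ^ (R - L) := by
    have : (2 : ℝ) ^ R = 2 ^ (R - L) * 2 ^ L := by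
      rw [← pow_add]
      congr 1
      omega
    rw [hθdef, this]
    field_simp
  classical
  set P : Matrix (Fin n) (Fin n) ℝ → Prop := fun Mn => ∃ B' : Finset (Fin n),
    B'.card = n - L ∧ (∀ i : Fin n, (i : ℕ) < n - 3 * L → i ∈ B') ∧
      lam / 2 ^ (R - L) ≤ |permOn Mn (univ.filter fun i : Fin n => L ≤ (i : ℕ)) B'| with hP
  set g : (Fin n → Fin n → Bool) → ℝ := fun ω => if ¬ P (N ω) then 1 else 0 with hg
  have hg1 : ∀ ω, g ω ≤ 1 := by
    intro ω
    simp only [hg]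
    split_ifs <;> norm_num
  have hfinal : ∀ ω, HasFilled (N ω) (θ * 2 ^ L) (n' + 8 * R + 5 * L ^ 2 + 3 * L) L
      (n - 3 * L) 0 → g ω ≤ 0 := by
    rintro ω ⟨B', ⟨-, hc, hper⟩, hmis⟩
    rw [hn'] at hc hper
    have hPω : P (N ω) := by
      refine ⟨B', by omega, ?_, ?_⟩
      · intro i hi
        by_contra hcon
        have := Finset.card_pos.2 ⟨i, mem_missing.2 ⟨hi, hcon⟩⟩
        omega
      · rw [hθL] at hper
        have : rowsOf n L n = univ.filter fun i : Fin n => L ≤ (i : ℕ) := by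
          ext i
          simp [mem_rowsOf]
        rwa [this] at hper
    simp only [hg, hPω, not_true_eq_false, if_false, le_refl]
  set δ₃ : ℝ := 0 + ((3 * L : ℕ) : ℝ) * (1 / 2) ^ L + (4 / 3) ^ L * (7 / 8) ^ (3 * L) with hδ₃
  have hδ₃0 : 0 ≤ δ₃ := by positivity
  set δ₂ : ℝ := δ₃ + ((5 * L ^ 2 : ℕ) : ℝ) * (1 / 2) ^ L +
    (4 / 3) ^ (L ^ 2 - L) * (15 / 16) ^ (5 * L ^ 2) with hδ₂
  have hδ₂0 : 0 ≤ δ₂ := by positivity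
  set g₃ := avgs n (3 * L) (n' + 8 * R + 5 * L ^ 2) g with hg₃
  set g₂ := avgs n (5 * L ^ 2) (n' + 8 * R) g₃ with hg₂
  have hg₃1 : ∀ ω, g₃ ω ≤ 1 := avgs_le_one hg1 _
  have hg₂1 : ∀ ω, g₂ ω ≤ 1 := avgs_le_one hg₃1 _
  have hphase3 : ∀ ω, HasHeavy (N ω) (θ * 2 ^ L) (n' + 8 * R + 5 * L ^ 2) L → g₃ ω ≤ δ₃ := by
    rintro ω ⟨B', hB'⟩
    refine phase_fill hN (by omega) hg1 le_rfl (3 * L) _ L (by omega) (by omega)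
      (d := n - 3 * L) (by omega) hfinal ω ⟨B', hB', ?_⟩
    have : n - 3 * L = n' + 8 * R + 5 * L ^ 2 := by omega
    rw [this, card_missing (by omega) hB'.1 hB'.2.1]
  have hphase2 : ∀ ω, HasHeavy (N ω) (θ * 2 ^ (L ^ 2)) (n' + 8 * R) (L ^ 2) → g₂ ω ≤ δ₂ := by
    intro ω hω
    refine phase_deficit hN hθ (by omega) hg₃1 hδ₃0 (5 * L ^ 2) _ (L ^ 2 - L) (by omega)
      (by omega) hphase3 ω ?_
    rwa [Nat.add_sub_cancel' hLL]
  have hphase1 : ∀ ω, avgs n (8 * R) n' g₂ ω ≤ δ₂ + ((8 * R : ℕ) : ℝ) * (1 / 2) ^ (L ^ 2) +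
      (4 / 3) ^ (R - L ^ 2) * (15 / 16) ^ (8 * R) := by
    intro ω
    refine phase_deficit hN hθ (by omega) hg₂1 hδ₂0 (8 * R) _ (R - L ^ 2) (by omega)
      le_rfl hphase2 ω ?_
    rw [Nat.add_sub_cancel' hLR.le, hθR]
    refine ⟨B.map (Fin.castLEEmb (by omega)), ?_, ?_, ?_⟩
    · intro j hj
      obtain ⟨i, -, rfl⟩ := Finset.mem_map.1 hj
      exact i.2
    · rw [Finset.card_map]
      omega
    · rw [hNdef, permOn_extSym]
      exact hBheavy
  have hbound := fun ω => (hphase1 ω).trans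
    (failure_bound (n := n) (by exact_mod_cast hnpos) hL100 hlog hLR (by omega))
  -- Averaging over all vectors gives the probability of failure.
  have hcardΩ : (Fintype.card (Fin n → Fin n → Bool) : ℝ) = 2 ^ (n * n) := by
    simp [← pow_mul]
  have hsum : ∑ ω, g ω ≤ 2 ^ (n * n) * (1 / 8 * (n : ℝ) ^ (-(-Real.log (19 / 20) / 20))) := by
    rw [← sum_avgs n (3 * L) (n' + 8 * R + 5 * L ^ 2) g, ← hg₃,
      ← sum_avgs n (5 * L ^ 2) (n' + 8 * R) g₃, ← hg₂, ← sum_avgs n (8 * R) n' g₂]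
    refine (Finset.sum_le_card_nsmul _ _ _ fun ω _ => hbound ω).trans ?_
    rw [nsmul_eq_mul, Finset.card_univ, hcardΩ]
  have hgsum : ∑ ω, g ω = #{ω : Fin n → Fin n → Bool | ¬ P (extSym n M ω)} := by
    rw [← Finset.sum_boole]
    exact Fintype.sum_equiv (Equiv.piComm fun _ _ => Bool) _ _ fun ω => rfl
  have hcompl := Finset.card_filter_add_card_filter_not
    (s := (univ : Finset (Fin n → Fin n → Bool))) fun ω => P (extSym n M ω)
  rw [Finset.card_univ] at hcompl
  have hcompl' : (#{ω : Fin n → Fin n → Bool | P (extSym n M ω)} : ℝ) +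
      #{ω : Fin n → Fin n → Bool | ¬ P (extSym n M ω)} = 2 ^ (n * n) := by
    rw [← hcardΩ]
    exact_mod_cast hcompl
  have hres : 1 - 1 / 8 * (n : ℝ) ^ (-(-Real.log (19 / 20) / 20)) ≤
      (#{ω : Fin n → Fin n → Bool | P (extSym n M ω)} : ℝ) / 2 ^ (n * n) := by
    rw [le_div_iff₀ (by positivity)]
    linarith
  unfold probExt
  convert hres
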